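/- arXiv:1908.08670 — 2 statements merged into one kernel-verified Lean document; each statement's English description precedes it below -/
import Mathlib

section
/- Let U be a p × p real orthogonal matrix with columns u_1, …, u_p and let Σ be a p × p real symmetric matrix. Among all p × p real diagonal matrices D, the Frobenius norm ‖U D Uᵀ − Σ‖_F is minimized by the diagonal matrix D* = diag(d_1*, …, d_p*) with d_i* = u_iᵀ Σ u_i (i.e. D* is the diagonal part of Uᵀ Σ U), and D* is the unique minimizer: for every diagonal D, ‖U D Uᵀ − Σ‖_F ≥ ‖U D* Uᵀ − Σ‖_F, with equality if and only if D = D*. -/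
/-!
Write `M = Uᵀ S U`. The Frobenius norm is invariant under orthogonal conjugation, so
`‖U D Uᵀ - S‖_F = ‖D - M‖_F`. The off-diagonal entries of `D - M` do not depend on the diagonal
matrix `D`, and the diagonal entries of `D* - M` vanish, which gives the Pythagorean identity
`‖U D Uᵀ - S‖_F² = ‖U D* Uᵀ - S‖_F² + ∑ i, (D i i - D* i i)²` (`frobSq_pythagoras`).
Both the inequality and the equality case are read off from it.
-/

open Matrix

/-- The Frobenius norm of a real square matrix: `‖A‖_F = √tr(AAᵀ)`. -/
noncomputable def frobNorm {p : ℕ} (A : Matrix (Fin p) (Fin p) ℝ) : ℝ :=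
  Real.sqrt ((A * Aᵀ).trace)

lemma trace_mul_transpose_eq_sum {p : ℕ} (A : Matrix (Fin p) (Fin p) ℝ) :
    (A * Aᵀ).trace = ∑ i, ∑ j, A i j ^ 2 := by
  simp [Matrix.trace, Matrix.mul_apply, sq]

lemma trace_conj_sub {p : ℕ} (U S D : Matrix (Fin p) (Fin p) ℝ) (hU : Uᵀ * U = 1) :
    ((U * D * Uᵀ - S) * (U * D * Uᵀ - S)ᵀ).trace
      = ((D - Uᵀ * S * U) * (D - Uᵀ * S * U)ᵀ).trace := by
  have hU' : U * Uᵀ = 1 := mul_eq_one_comm.mp hU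
  have h : U * D * Uᵀ - S = U * (D - Uᵀ * S * U) * Uᵀ := by
    have : U * (Uᵀ * S * U) * Uᵀ = (U * Uᵀ) * S * (U * Uᵀ) := by
      simp only [Matrix.mul_assoc]
    rw [Matrix.mul_sub, Matrix.sub_mul, this, hU', Matrix.one_mul, Matrix.mul_one]
  rw [h]
  generalize D - Uᵀ * S * U = X
  have h2 : U * X * Uᵀ * (U * X * Uᵀ)ᵀ = U * (X * (Uᵀ * U) * Xᵀ * Uᵀ) := by
    simp only [Matrix.transpose_mul, Matrix.transpose_transpose, Matrix.mul_assoc]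
  rw [h2, hU, Matrix.mul_one, Matrix.trace_mul_comm, Matrix.mul_assoc, hU, Matrix.mul_one]

/-- Pythagoras: the diagonal part of `Uᵀ S U` is the orthogonal projection of `Uᵀ S U` onto the
diagonal matrices. -/
lemma frobSq_pythagoras {p : ℕ} (U S D : Matrix (Fin p) (Fin p) ℝ) (hU : Uᵀ * U = 1)
    (hD : D.IsDiag) :
    ((U * D * Uᵀ - S) * (U * D * Uᵀ - S)ᵀ).trace
      = ((U * Matrix.diagonal (fun i => (Uᵀ * S * U) i i) * Uᵀ - S) *
          (U * Matrix.diagonal (fun i => (Uᵀ * S * U) i i) * Uᵀ - S)ᵀ).trace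
        + ∑ i, (D i i - (Uᵀ * S * U) i i) ^ 2 := by
  rw [trace_conj_sub U S D hU, trace_conj_sub U S _ hU, trace_mul_transpose_eq_sum,
    trace_mul_transpose_eq_sum, ← Finset.sum_add_distrib]
  generalize Uᵀ * S * U = M
  refine Finset.sum_congr rfl fun i _ => ?_
  have hdiag : (D i i - M i i) ^ 2 = ∑ j, if i = j then (D i i - M i i) ^ 2 else 0 := by simp
  rw [hdiag, ← Finset.sum_add_distrib]
  refine Finset.sum_congr rfl fun j _ => ?_
  by_cases hij : i = j
  · subst hij
    simp
  · simp [hij, hD hij]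

/-- The oracle solution of the rotation-equivariant nonlinear shrinkage
problem: among all diagonal `D`, `‖U D Uᵀ − Σ‖_F` is uniquely minimized by the diagonal
part `D*` of `Uᵀ Σ U`, whose entries are `d_i* = u_iᵀ Σ u_i`. -/
theorem oracle_diagonal_minimizer
    (p : ℕ) (U : Matrix (Fin p) (Fin p) ℝ) (hU : Uᵀ * U = 1)
    (S : Matrix (Fin p) (Fin p) ℝ) (hS : S.IsSymm)
    (Dstar : Matrix (Fin p) (Fin p) ℝ)
    (hDstar : Dstar = Matrix.diagonal (fun i => (Uᵀ * S * U) i i)) :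
    (∀ i, Dstar i i = (fun j => U j i) ⬝ᵥ (S *ᵥ fun j => U j i)) ∧
    ∀ D : Matrix (Fin p) (Fin p) ℝ, D.IsDiag →
      frobNorm (U * Dstar * Uᵀ - S) ≤ frobNorm (U * D * Uᵀ - S) ∧
      (frobNorm (U * D * Uᵀ - S) = frobNorm (U * Dstar * Uᵀ - S) ↔ D = Dstar) := by
  constructor
  · intro i
    rw [hDstar, Matrix.diagonal_apply_eq, Matrix.mul_assoc]
    rfl
  · intro D hD
    have key := frobSq_pythagoras U S D hU hD
    rw [← hDstar] at key
    have hnn : 0 ≤ ∑ i, (D i i - (Uᵀ * S * U) i i) ^ 2 :=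
      Finset.sum_nonneg fun i _ => sq_nonneg _
    have hpos : ∀ A : Matrix (Fin p) (Fin p) ℝ, 0 ≤ (A * Aᵀ).trace := fun A => by
      rw [trace_mul_transpose_eq_sum]
      positivity
    refine ⟨Real.sqrt_le_sqrt (by linarith), fun h => ?_, fun h => by rw [h]⟩
    have h0 := (Real.sqrt_inj (hpos _) (hpos _)).mp h
    have hz : ∑ i, (D i i - (Uᵀ * S * U) i i) ^ 2 = 0 := by linarith
    rw [Finset.sum_eq_zero_iff_of_nonneg fun i _ => sq_nonneg _] at hz
    ext i j
    by_cases hij : i = j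
    · subst hij
      have := pow_eq_zero_iff two_ne_zero |>.mp (hz i (Finset.mem_univ i))
      rw [hDstar, Matrix.diagonal_apply_eq]
      linarith
    · rw [hDstar, hD hij, Matrix.diagonal_apply_ne _ hij]
end

section
/- For each p, let m = m(p) be a positive integer with p/m → c ∈ (0, ∞) as p → ∞, and let v_1, …, v_m and w_1, …, w_m be vectors in ℝ^p (depending on p). Define S̃_m = Σ_{l=1}^{m} (v_l + w_l)(v_l + w_l)ᵀ and S_m = Σ_{l=1}^{m} w_l w_lᵀ. Suppose: (i) there is a sequence ε_p with √p·ε_p → 0 such that every entry of every v_l is at most ε_p in absolute value; and (ii) limsup_{p→∞} tr(S_m)/p < ∞. Then the Lévy distance L(F^{S̃_m}, F^{S_m}) between the ESDs of S̃_m and S_m tends to 0 as p → ∞. -/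
/-!
Write `S̃ = (V + W)(V + W)ᵀ`, `S = W Wᵀ` and `C = V Vᵀ`. By Young's inequality, for every `η > 0`
the quadratic forms satisfy `S̃ ≤ (1 + η) S + (1 + η⁻¹) C`, and also `S ≤ (1 + η) S̃ + (1 + η⁻¹) C`,
since `W = (V + W) + (-V)`. A Weyl-type dimension count (`numGt_le_of_form_le`) turns such a form
inequality into an inequality between numbers of large eigenvalues:
`#{λ(S̃) > y} ≤ #{λ(S) > x} + #{λ(C) > d}` as soon as `(1 + η) x + (1 + η⁻¹) d ≤ y`.

By Markov's inequality `#{λ(C) > d} ≤ tr C / d`, and `tr C ≤ m p ε_p² = o(p)`; so this term is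
negligible for each fixed `d`. For `x ≤ K` one takes `η = ε / (2K)` and `d` small in terms of `η`,
so that `y = x + ε` is allowed. For `x > K` no comparison is needed: by Markov again at most
`O(p / K)` eigenvalues exceed `K`, because the traces are `O(p)`. Both one-sided estimates together
bound the Lévy distance by `ε` for all large `p`.
-/

open MeasureTheory Filter Matrix

/-- The empirical spectral distribution function of a real square matrix:
`F^A(x) = (1/p)·#{j : λ_j(A) ≤ x}` (junk value `0` if the matrix is not symmetric). -/
noncomputable def esdCdf {n : ℕ} (A : Matrix (Fin n) (Fin n) ℝ) (x : ℝ) : ℝ := by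
  classical
  exact if h : A.IsHermitian then
    (n : ℝ)⁻¹ * (Finset.univ.filter (fun j : Fin n => h.eigenvalues j ≤ x)).card
  else 0

/-- The Lévy distance between two distribution functions on `ℝ`. -/
noncomputable def levyDist (F G : ℝ → ℝ) : ℝ :=
  sInf {ε : ℝ | 0 < ε ∧ ∀ x, F (x - ε) - ε ≤ G x ∧ G x ≤ F (x + ε) + ε}

/-! ### Eigenvalue counts and quadratic forms -/

/-- The number of eigenvalues of a real symmetric matrix, with multiplicity, that exceed `x`. -/
noncomputable def numGt {n : ℕ} {A : Matrix (Fin n) (Fin n) ℝ} (h : A.IsHermitian) (x : ℝ) : ℕ :=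
  Fintype.card {j : Fin n // x < h.eigenvalues j}

/-- The coordinates of `u` in the orthonormal eigenbasis of a symmetric matrix, as a linear map. -/
noncomputable def eigCoord {n : ℕ} {A : Matrix (Fin n) (Fin n) ℝ} (h : A.IsHermitian) :
    (Fin n → ℝ) →ₗ[ℝ] (Fin n → ℝ) :=
  Matrix.mulVecLin (star (h.eigenvectorUnitary : Matrix (Fin n) (Fin n) ℝ))

lemma dotProduct_self_eq_sum_eigCoord {n : ℕ} {A : Matrix (Fin n) (Fin n) ℝ} (h : A.IsHermitian)
    (u : Fin n → ℝ) : u ⬝ᵥ u = ∑ j, eigCoord h u j ^ 2 := by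
  have hU : (h.eigenvectorUnitary : Matrix (Fin n) (Fin n) ℝ) *
      star (h.eigenvectorUnitary : Matrix (Fin n) (Fin n) ℝ) = 1 :=
    Unitary.mul_star_self_of_mem h.eigenvectorUnitary.2
  have h1 : ∑ j, eigCoord h u j ^ 2 = eigCoord h u ⬝ᵥ eigCoord h u := by
    simp [dotProduct, sq]
  rw [h1, eigCoord, Matrix.mulVecLin_apply, Matrix.dotProduct_mulVec, Matrix.star_eq_conjTranspose,
    Matrix.conjTranspose_eq_transpose_of_trivial, Matrix.mulVec_transpose, Matrix.vecMul_vecMul]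
  rw [Matrix.star_eq_conjTranspose, Matrix.conjTranspose_eq_transpose_of_trivial] at hU
  rw [hU, Matrix.vecMul_one]

lemma form_eq_sum_eigCoord {n : ℕ} {A : Matrix (Fin n) (Fin n) ℝ} (h : A.IsHermitian)
    (u : Fin n → ℝ) : u ⬝ᵥ A *ᵥ u = ∑ j, h.eigenvalues j * eigCoord h u j ^ 2 := by
  have hs : A = (h.eigenvectorUnitary : Matrix (Fin n) (Fin n) ℝ) *
      Matrix.diagonal h.eigenvalues *
      star (h.eigenvectorUnitary : Matrix (Fin n) (Fin n) ℝ) := by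
    have := h.spectral_theorem
    rw [Unitary.conjStarAlgAut_apply] at this
    exact this
  have h1 : ∑ j, h.eigenvalues j * eigCoord h u j ^ 2
      = eigCoord h u ⬝ᵥ (Matrix.diagonal h.eigenvalues *ᵥ eigCoord h u) := by
    simp only [dotProduct, Matrix.mulVec_diagonal]
    exact Finset.sum_congr rfl fun j _ => by ring
  rw [h1]
  conv_lhs => rw [hs]
  rw [eigCoord, Matrix.mulVecLin_apply, Matrix.star_eq_conjTranspose,
    Matrix.conjTranspose_eq_transpose_of_trivial, ← Matrix.mulVec_mulVec, ← Matrix.mulVec_mulVec,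
    Matrix.dotProduct_mulVec, Matrix.mulVec_transpose]

/-- If `u` has no component along eigenvectors with eigenvalue above `x`, its Rayleigh quotient is
at most `x`. -/
lemma form_le_of_eigCoord {n : ℕ} {A : Matrix (Fin n) (Fin n) ℝ} (h : A.IsHermitian) (x : ℝ)
    (u : Fin n → ℝ) (hu : ∀ j, x < h.eigenvalues j → eigCoord h u j = 0) :
    u ⬝ᵥ A *ᵥ u ≤ x * (u ⬝ᵥ u) := by
  rw [form_eq_sum_eigCoord h, dotProduct_self_eq_sum_eigCoord h, Finset.mul_sum]
  refine Finset.sum_le_sum fun j _ => ?_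
  by_cases hj : x < h.eigenvalues j
  · simp [hu j hj]
  · exact mul_le_mul_of_nonneg_right (not_lt.1 hj) (sq_nonneg _)

/-- If `u ≠ 0` has no component along eigenvectors with eigenvalue at most `y`, its Rayleigh
quotient exceeds `y`. -/
lemma lt_form_of_eigCoord {n : ℕ} {A : Matrix (Fin n) (Fin n) ℝ} (h : A.IsHermitian) (y : ℝ)
    (u : Fin n → ℝ) (hu0 : u ≠ 0) (hu : ∀ j, ¬ y < h.eigenvalues j → eigCoord h u j = 0) :
    y * (u ⬝ᵥ u) < u ⬝ᵥ A *ᵥ u := by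
  have hpos : u ⬝ᵥ u ≠ 0 := fun h0 => hu0 (dotProduct_self_eq_zero.1 h0)
  rw [dotProduct_self_eq_sum_eigCoord h] at hpos
  obtain ⟨j₀, -, hj₀⟩ := Finset.exists_ne_zero_of_sum_ne_zero hpos
  rw [form_eq_sum_eigCoord h, dotProduct_self_eq_sum_eigCoord h, Finset.mul_sum]
  refine Finset.sum_lt_sum (fun j _ => ?_) ⟨j₀, Finset.mem_univ _, ?_⟩
  · by_cases hj : y < h.eigenvalues j
    · exact mul_le_mul_of_nonneg_right hj.le (sq_nonneg _)
    · simp [hu j hj]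
  · have hj : y < h.eigenvalues j₀ := by
      by_contra hj
      exact hj₀ (by simp [hu j₀ hj])
    exact mul_lt_mul_of_pos_right hj (lt_of_le_of_ne (sq_nonneg _) (Ne.symm hj₀))

/-- Weyl-type inequality for eigenvalue counts. If the conclusion failed, the linear conditions
"no component of `u` along the eigenvectors of `A` above `x`, of `C` above `d`, and of `A'` at or
below `y`" would number fewer than `n`, so some `u ≠ 0` would satisfy all of them; its quadratic
forms contradict the hypothesis. -/
lemma numGt_le_of_form_le {n : ℕ} {A A' C : Matrix (Fin n) (Fin n) ℝ} (hA : A.IsHermitian)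
    (hA' : A'.IsHermitian) (hC : C.IsHermitian) {α β x d y : ℝ} (hα : 0 ≤ α) (hβ : 0 ≤ β)
    (hform : ∀ u, u ⬝ᵥ A' *ᵥ u ≤ α * (u ⬝ᵥ A *ᵥ u) + β * (u ⬝ᵥ C *ᵥ u))
    (hy : α * x + β * d ≤ y) : numGt hA' y ≤ numGt hA x + numGt hC d := by
  by_contra! hlt
  let f : (Fin n → ℝ) →ₗ[ℝ] (({j : Fin n // x < hA.eigenvalues j} → ℝ) ×
      ({j : Fin n // d < hC.eigenvalues j} → ℝ)) × ({j : Fin n // ¬ y < hA'.eigenvalues j} → ℝ) :=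
    (((LinearMap.funLeft ℝ ℝ Subtype.val).comp (eigCoord hA)).prod
      ((LinearMap.funLeft ℝ ℝ Subtype.val).comp (eigCoord hC))).prod
      ((LinearMap.funLeft ℝ ℝ Subtype.val).comp (eigCoord hA'))
  have hker : LinearMap.ker f ≠ ⊥ := by
    apply LinearMap.ker_ne_bot_of_finrank_lt
    have hle : Fintype.card {j : Fin n // y < hA'.eigenvalues j} ≤ n := by
      simpa using Fintype.card_subtype_le (fun j : Fin n => y < hA'.eigenvalues j)
    simp only [Module.finrank_prod, Module.finrank_fintype_fun_eq_card, Fintype.card_subtype_compl,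
      Fintype.card_fin]
    simp only [numGt] at hlt
    omega
  obtain ⟨u, hu, hu0⟩ := (Submodule.ne_bot_iff _).1 hker
  have hf : f u = 0 := hu
  have h1 : ∀ j, x < hA.eigenvalues j → eigCoord hA u j = 0 := fun j hj =>
    congrFun (congrArg (fun z => z.1.1) hf) ⟨j, hj⟩
  have h2 : ∀ j, d < hC.eigenvalues j → eigCoord hC u j = 0 := fun j hj =>
    congrFun (congrArg (fun z => z.1.2) hf) ⟨j, hj⟩
  have h3 : ∀ j, ¬ y < hA'.eigenvalues j → eigCoord hA' u j = 0 := fun j hj =>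
    congrFun (congrArg (fun z => z.2) hf) ⟨j, hj⟩
  have e1 := mul_le_mul_of_nonneg_left (form_le_of_eigCoord hA x u h1) hα
  have e2 := mul_le_mul_of_nonneg_left (form_le_of_eigCoord hC d u h2) hβ
  have e3 := lt_form_of_eigCoord hA' y u hu0 h3
  have e4 : 0 ≤ u ⬝ᵥ u := Finset.sum_nonneg fun j _ => mul_self_nonneg _
  nlinarith [hform u, mul_le_mul_of_nonneg_right hy e4]

/-- Markov's inequality for the eigenvalues of a positive semidefinite matrix. -/
lemma mul_numGt_le_trace {n : ℕ} {A : Matrix (Fin n) (Fin n) ℝ} (hA : A.PosSemidef) (t : ℝ) :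
    t * numGt hA.1 t ≤ A.trace := by
  rw [hA.1.trace_eq_sum_eigenvalues, numGt, Fintype.card_subtype, mul_comm, ← nsmul_eq_mul]
  refine (Finset.card_nsmul_le_sum _ hA.1.eigenvalues t fun j hj =>
    (Finset.mem_filter.1 hj).2.le).trans ?_
  exact Finset.sum_le_sum_of_subset_of_nonneg (Finset.filter_subset _ _)
    fun j _ _ => hA.eigenvalues_nonneg j

/-! ### One-sided comparison of spectral distributions -/

lemma esdCdf_eq {n : ℕ} (hn : 0 < n) {A : Matrix (Fin n) (Fin n) ℝ} (h : A.IsHermitian) (x : ℝ) :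
    esdCdf A x = 1 - (numGt h x : ℝ) / n := by
  have hcard : (Finset.univ.filter (fun j : Fin n => h.eigenvalues j ≤ x)).card + numGt h x = n := by
    rw [numGt, Fintype.card_subtype]
    have := Finset.card_filter_add_card_filter_not (s := (Finset.univ : Finset (Fin n)))
      (fun j : Fin n => h.eigenvalues j ≤ x)
    simpa using this
  have hcard' : ((Finset.univ.filter (fun j : Fin n => h.eigenvalues j ≤ x)).card : ℝ)
      + numGt h x = n := by exact_mod_cast hcard
  have hn' : (n : ℝ) ≠ 0 := by positivity
  have : esdCdf A x
      = (n : ℝ)⁻¹ * (Finset.univ.filter (fun j : Fin n => h.eigenvalues j ≤ x)).card := by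
    unfold esdCdf
    rw [dif_pos h]
  rw [this]
  field_simp
  linarith

/-- One half of the Lévy estimate: the Weyl-type comparison handles `x ≤ K`, and the trace bound on
`A'` alone handles `x > K`. -/
lemma esdCdf_le {n : ℕ} (hn : 0 < n) {A A' C : Matrix (Fin n) (Fin n) ℝ} (hA : A.PosSemidef)
    (hA' : A'.PosSemidef) (hC : C.PosSemidef) {η d K ε : ℝ} (hη : 0 < η) (hd : 0 < d) (hK : 0 < K)
    (hε : 0 < ε)
    (hform : ∀ u, u ⬝ᵥ A' *ᵥ u ≤ (1 + η) * (u ⬝ᵥ A *ᵥ u) + (1 + η⁻¹) * (u ⬝ᵥ C *ᵥ u))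
    (hy : η * K + (1 + η⁻¹) * d ≤ ε) (hCt : C.trace ≤ ε * d * n) (hAt : A'.trace ≤ ε * K * n)
    (x : ℝ) : esdCdf A x ≤ esdCdf A' (x + ε) + ε := by
  rw [esdCdf_eq hn hA.1, esdCdf_eq hn hA'.1]
  have hn' : (0 : ℝ) < n := by exact_mod_cast hn
  suffices h : (numGt hA'.1 (x + ε) : ℝ) ≤ numGt hA.1 x + ε * n by
    have := div_le_div_of_nonneg_right h hn'.le
    rw [add_div, mul_div_cancel_right₀ _ hn'.ne'] at this
    linarith
  rcases le_or_gt x K with hx | hx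
  · have h1 := numGt_le_of_form_le hA.1 hA'.1 hC.1 (x := x) (d := d) (y := x + ε)
      (by positivity) (by positivity) hform (by nlinarith)
    have h1' : (numGt hA'.1 (x + ε) : ℝ) ≤ numGt hA.1 x + numGt hC.1 d := by exact_mod_cast h1
    have h2 := (mul_numGt_le_trace hC d).trans hCt
    have h3 : (numGt hC.1 d : ℝ) ≤ ε * n := by
      refine le_of_mul_le_mul_left ?_ hd
      linarith
    linarith
  · have h2 := (mul_numGt_le_trace hA' (x + ε)).trans hAt
    have h3 : (numGt hA'.1 (x + ε) : ℝ) ≤ ε * n := by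
      refine le_of_mul_le_mul_left ?_ hK
      have : K * (numGt hA'.1 (x + ε) : ℝ) ≤ (x + ε) * numGt hA'.1 (x + ε) :=
        mul_le_mul_of_nonneg_right (by linarith) (Nat.cast_nonneg _)
      linarith
    have : (0 : ℝ) ≤ numGt hA.1 x := Nat.cast_nonneg _
    linarith

/-! ### Sums of rank-one matrices -/

lemma posSemidef_sum_vecMulVec {n k : ℕ} (a : Fin k → Fin n → ℝ) :
    (∑ l, vecMulVec (a l) (a l)).PosSemidef :=
  Matrix.posSemidef_sum _ fun l _ => by
    simpa using Matrix.posSemidef_vecMulVec_self_star (a l)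

lemma form_sum_vecMulVec {n k : ℕ} (a : Fin k → Fin n → ℝ) (u : Fin n → ℝ) :
    u ⬝ᵥ (∑ l, vecMulVec (a l) (a l)) *ᵥ u = ∑ l, (a l ⬝ᵥ u) ^ 2 := by
  rw [Matrix.sum_mulVec, dotProduct_sum]
  refine Finset.sum_congr rfl fun l _ => ?_
  rw [Matrix.vecMulVec_mulVec, dotProduct_smul, dotProduct_comm u]
  simp [sq]

lemma trace_sum_vecMulVec {n k : ℕ} (a : Fin k → Fin n → ℝ) :
    (∑ l, vecMulVec (a l) (a l)).trace = ∑ l, ∑ j, a l j ^ 2 := by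
  rw [Matrix.trace_sum]
  exact Finset.sum_congr rfl fun l _ => by
    rw [Matrix.trace_vecMulVec]; simp [dotProduct, sq]

/-- Young's inequality in the form used to compare quadratic forms. -/
lemma add_sq_le_young {η : ℝ} (hη : 0 < η) (s t : ℝ) :
    (s + t) ^ 2 ≤ (1 + η) * s ^ 2 + (1 + η⁻¹) * t ^ 2 := by
  have h : (1 + η) * s ^ 2 + (1 + η⁻¹) * t ^ 2 - (s + t) ^ 2 = η⁻¹ * (η * s - t) ^ 2 := by
    field_simp
    ring
  have : 0 ≤ η⁻¹ * (η * s - t) ^ 2 := by positivity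
  linarith

/-- Summing Young's inequality over the rank-one terms. The disjunction allows `b = a + e` as well as
`b = a - e`, so that one lemma compares `S̃` with `S` in both directions. -/
lemma form_add_le {n k : ℕ} {η : ℝ} (hη : 0 < η) (a b e : Fin k → Fin n → ℝ)
    (hb : ∀ l u, (b l ⬝ᵥ u) ^ 2 = (a l ⬝ᵥ u + e l ⬝ᵥ u) ^ 2 ∨
      (b l ⬝ᵥ u) ^ 2 = (a l ⬝ᵥ u + -(e l ⬝ᵥ u)) ^ 2) (u : Fin n → ℝ) :
    u ⬝ᵥ (∑ l, vecMulVec (b l) (b l)) *ᵥ u ≤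
      (1 + η) * (u ⬝ᵥ (∑ l, vecMulVec (a l) (a l)) *ᵥ u) +
      (1 + η⁻¹) * (u ⬝ᵥ (∑ l, vecMulVec (e l) (e l)) *ᵥ u) := by
  simp only [form_sum_vecMulVec, Finset.mul_sum, ← Finset.sum_add_distrib]
  refine Finset.sum_le_sum fun l _ => ?_
  rcases hb l u with h | h <;> rw [h]
  · exact add_sq_le_young hη _ _
  · simpa using add_sq_le_young hη (a l ⬝ᵥ u) (-(e l ⬝ᵥ u))

/-! ### The limit -/

/-- The normalised trace `tr(V Vᵀ)/p` is at most `(p ε_p²) (m/p)`, which tends to `0`. -/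
lemma tendsto_sum_sq_div (c : ℝ) (hc : 0 < c) (m : ℕ → ℕ)
    (hratio : Tendsto (fun p : ℕ => (p : ℝ) / (m p : ℝ)) atTop (nhds c))
    (v : ∀ p : ℕ, Fin (m p) → Fin p → ℝ) (ε : ℕ → ℝ)
    (hε : Tendsto (fun p : ℕ => Real.sqrt p * ε p) atTop (nhds 0))
    (hv : ∀ p l j, |v p l j| ≤ ε p) :
    Tendsto (fun p => (∑ l, ∑ j, v p l j ^ 2) / (p : ℝ)) atTop (nhds 0) := by
  have hlim : Tendsto (fun p : ℕ => (Real.sqrt p * ε p) ^ 2 * ((p : ℝ) / (m p : ℝ))⁻¹) atTop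
      (nhds 0) := by
    simpa using (hε.pow 2).mul (hratio.inv₀ hc.ne')
  refine squeeze_zero (fun p => by positivity) (fun p => ?_) hlim
  have h1 : ∑ l, ∑ j, v p l j ^ 2 ≤ (m p : ℝ) * (p * ε p ^ 2) := by
    calc ∑ l, ∑ j, v p l j ^ 2 ≤ ∑ _l : Fin (m p), ∑ _j : Fin p, ε p ^ 2 :=
          Finset.sum_le_sum fun l _ => Finset.sum_le_sum fun j _ => by
            rw [← sq_abs]; exact pow_le_pow_left₀ (abs_nonneg _) (hv p l j) 2
      _ = _ := by simp
  refine (div_le_div_of_nonneg_right h1 (Nat.cast_nonneg p)).trans (le_of_eq ?_)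
  rw [mul_pow, Real.sq_sqrt (Nat.cast_nonneg p), inv_div]
  ring

lemma levyDist_nonneg (F G : ℝ → ℝ) : 0 ≤ levyDist F G :=
  Real.sInf_nonneg fun _ h => h.1.le

lemma levyDist_le {F G : ℝ → ℝ} {ε : ℝ} (hε : 0 < ε)
    (h1 : ∀ x, F x ≤ G (x + ε) + ε) (h2 : ∀ x, G x ≤ F (x + ε) + ε) : levyDist F G ≤ ε :=
  csInf_le ⟨0, fun _ h => h.1.le⟩ ⟨hε, fun x => ⟨by
    have := h1 (x - ε)
    rw [sub_add_cancel] at this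
    linarith, h2 x⟩⟩

/-- (Lemma 1 of Zheng–Li.) If the perturbing vectors `v_l` have entries
`o(1/√p)` uniformly and `tr(S_m)/p` stays bounded, then the ESDs of
`S̃_m = Σ (v_l+w_l)(v_l+w_l)ᵀ` and `S_m = Σ w_l w_lᵀ` merge in Lévy distance. -/
theorem levy_distance_perturbation
    (c : ℝ) (hc : 0 < c) (m : ℕ → ℕ) (hm : ∀ p, 0 < m p)
    (hratio : Tendsto (fun p : ℕ => (p : ℝ) / (m p : ℝ)) atTop (nhds c))
    (v w : ∀ p : ℕ, Fin (m p) → Fin p → ℝ)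
    (St Sm : ∀ p : ℕ, Matrix (Fin p) (Fin p) ℝ)
    (hSt : ∀ p, St p = ∑ l : Fin (m p),
      vecMulVec (v p l + w p l) (v p l + w p l))
    (hSm : ∀ p, Sm p = ∑ l : Fin (m p), vecMulVec (w p l) (w p l))
    (hv : ∃ ε : ℕ → ℝ, Tendsto (fun p : ℕ => Real.sqrt p * ε p) atTop (nhds 0) ∧
      ∀ p l j, |v p l j| ≤ ε p)
    (htr : ∃ B : ℝ, ∀ᶠ p in atTop, (Sm p).trace / (p : ℝ) ≤ B) :
    Tendsto (fun p => levyDist (esdCdf (St p)) (esdCdf (Sm p))) atTop (nhds 0) := by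
  obtain ⟨e, he, hve⟩ := hv
  obtain ⟨B, hB⟩ := htr
  have hτ := tendsto_sum_sq_div c hc m hratio v e he hve
  suffices h : ∀ ε : ℝ, 0 < ε → ∀ᶠ p in atTop, levyDist (esdCdf (St p)) (esdCdf (Sm p)) ≤ ε by
    rw [Metric.tendsto_nhds]
    intro ε hε
    filter_upwards [h (ε / 2) (half_pos hε)] with p hp
    rw [Real.dist_eq, sub_zero, abs_of_nonneg (levyDist_nonneg _ _)]
    linarith
  intro ε hε
  -- `K` is chosen so that both traces are at most `ε K p`, using `tr S̃ ≤ 2 tr S + 2 tr (V Vᵀ)`;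
  -- then `η` and `d` split the allowed shift `ε` into two halves.
  obtain ⟨K, hK, hKdef⟩ : ∃ K : ℝ, 0 < K ∧ 2 * |B| + 2 = ε * K :=
    ⟨(2 * |B| + 2) / ε, by positivity, by field_simp⟩
  obtain ⟨η, hη, hηdef⟩ : ∃ η : ℝ, 0 < η ∧ η * K = ε / 2 :=
    ⟨ε / 2 / K, by positivity, by field_simp⟩
  obtain ⟨d, hd, hddef⟩ : ∃ d : ℝ, 0 < d ∧ (1 + η⁻¹) * d = ε / 2 :=
    ⟨ε / 2 / (1 + η⁻¹), by positivity, by field_simp⟩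
  filter_upwards [hB, eventually_gt_atTop 0, hτ.eventually_lt_const (mul_pos hε hd),
    hτ.eventually_lt_const one_pos] with p hBp hp hτ1 hτ2
  have hp' : (0 : ℝ) < p := by exact_mod_cast hp
  rw [div_le_iff₀ hp'] at hBp
  rw [div_lt_iff₀ hp'] at hτ1 hτ2
  have hBabs : B * p ≤ |B| * p := mul_le_mul_of_nonneg_right (le_abs_self B) hp'.le
  have habs : 0 ≤ |B| * p := by positivity
  have hC := posSemidef_sum_vecMulVec (v p)
  have hSmp : (Sm p).PosSemidef := hSm p ▸ posSemidef_sum_vecMulVec (w p)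
  have hStp : (St p).PosSemidef :=
    hSt p ▸ posSemidef_sum_vecMulVec (fun l => v p l + w p l)
  have hCt := trace_sum_vecMulVec (v p)
  have hSmt : (Sm p).trace = ∑ l, ∑ j, w p l j ^ 2 := hSm p ▸ trace_sum_vecMulVec (w p)
  have hStt : (St p).trace ≤ 2 * (Sm p).trace + 2 * ∑ l, ∑ j, v p l j ^ 2 := by
    rw [hSmt, hSt p, trace_sum_vecMulVec (fun l => v p l + w p l)]
    simp only [Finset.mul_sum, ← Finset.sum_add_distrib]
    refine Finset.sum_le_sum fun l _ => Finset.sum_le_sum fun j _ => ?_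
    rw [Pi.add_apply]
    nlinarith [sq_nonneg (v p l j - w p l j)]
  have hEK : ε * K * p = 2 * (|B| * p) + 2 * p := by rw [← hKdef]; ring
  refine levyDist_le hε ?_ ?_
  · refine esdCdf_le hp hStp hSmp hC hη hd hK hε (fun u => ?_) (by linarith)
      (by linarith) (by linarith)
    rw [hSt p, hSm p]
    refine form_add_le hη (fun l => v p l + w p l) (w p) (v p) (fun l u => Or.inr ?_) u
    rw [add_dotProduct]; ring
  · refine esdCdf_le hp hSmp hStp hC hη hd hK hε (fun u => ?_) (by linarith)
      (by linarith) (by linarith)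
    rw [hSt p, hSm p]
    refine form_add_le hη (w p) (fun l => v p l + w p l) (v p) (fun l u => Or.inl ?_) u
    rw [add_dotProduct]; ring
end
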